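/- arXiv:0804.2041 — 4 statements merged into one kernel-verified Lean document; each statement's English description precedes it below -/
import Mathlib

section
/- Let n ≥ 2, and in ℚ^n set λ = (3/2, 1/2, …, 1/2), μ = (1/2, …, 1/2), and ρ = ((2n−1)/2, (2n−3)/2, …, 1/2). In the group algebra ℤ[ℚ^n] (the algebra with ℤ-basis the symbols e^ν for ν ∈ ℚ^n, with e^ν · e^ζ = e^{ν+ζ}), the following identity holds: Σ_{(σ,ε) ∈ W_n} sgn(σ)·(Π_i ε_i)·e^{(σ,ε)·(λ+ρ)} = ( Σ_{ν ∈ W_n·λ} e^ν + n · Σ_{ν ∈ W_n·μ} e^ν ) · ( Σ_{(σ,ε) ∈ W_n} sgn(σ)·(Π_i ε_i)·e^{(σ,ε)·ρ} ). -/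
/-- The hyperoctahedral group `Wₙ` of signed permutations, realized as pairs
`(σ, ε)` with `σ` a permutation of `Fin n` and `ε : Fin n → ℤˣ` a sign vector. -/
abbrev SignedPerm (n : ℕ) := Equiv.Perm (Fin n) × (Fin n → ℤˣ)

/-- The action of a signed permutation `(σ, ε)` on `x ∈ ℚⁿ`:
`((σ,ε)·x)ᵢ = εᵢ · x_{σ⁻¹(i)}`. -/
def signedPermAct {n : ℕ} (p : SignedPerm n) (x : Fin n → ℚ) : Fin n → ℚ :=
  fun i => ((p.2 i : ℤ) : ℚ) * x (p.1⁻¹ i)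

/-- The sign of a signed permutation `(σ, ε)`: `sgn(σ)·Πᵢ εᵢ`, the determinant
of its action on `ℚⁿ`. -/
def signedPermSign {n : ℕ} (p : SignedPerm n) : ℤ :=
  (Equiv.Perm.sign p.1 : ℤ) * ∏ i, (p.2 i : ℤ)

/-- The weight `λ = ϖ₁ + ϖₙ = (3/2, 1/2, …, 1/2)` of `Spin_{2n+1}` in Bourbaki
coordinates. -/
def lamWt (n : ℕ) : Fin n → ℚ := fun i => if (i : ℕ) = 0 then 3/2 else 1/2

/-- The minuscule weight `μ = ϖₙ = (1/2, …, 1/2)`. -/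
def muWt (n : ℕ) : Fin n → ℚ := fun _ => 1/2

/-- The half-sum of the positive roots of type `Bₙ`,
`ρ = ((2n-1)/2, (2n-3)/2, …, 1/2)` (0-indexed: `ρᵢ = (2n - 2i - 1)/2`). -/
def rhoWt (n : ℕ) : Fin n → ℚ := fun i => (2 * (n : ℚ) - 2 * ((i : ℕ) : ℚ) - 1) / 2

section Helpers

/-- The alternating sum over the orbit of `x`. -/
noncomputable def altSum {n : ℕ} (x : Fin n → ℚ) : AddMonoidAlgebra ℤ (Fin n → ℚ) :=
  ∑ p : SignedPerm n, AddMonoidAlgebra.single (signedPermAct p x) (signedPermSign p)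

/-- The weight `ε/2`. -/
def halfVec {n : ℕ} (e : Fin n → ℤˣ) : Fin n → ℚ := fun i => ((e i : ℤ) : ℚ) * (1/2)

/-- The signed half vector with `3/2` at `j`. -/
def threeVec {n : ℕ} (q : Fin n × (Fin n → ℤˣ)) : Fin n → ℚ :=
  fun i => ((q.2 i : ℤ) : ℚ) * (if i = q.1 then 3/2 else 1/2)

/-- The vector `± e_j`. -/
def unitVec {n : ℕ} (q : Fin n × ℤˣ) : Fin n → ℚ :=
  fun i => if i = q.1 then ((q.2 : ℤ) : ℚ) else 0

lemma altSum_eq_zero_of_eq {n : ℕ} (x : Fin n → ℚ) (i j : Fin n) (hij : i ≠ j)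
    (h : x i = x j) : altSum x = 0 := by
  unfold altSum
  have hsw : ∀ k, x (Equiv.swap i j k) = x k := by
    intro k
    by_cases h1 : k = i
    · subst h1; simp [h]
    · by_cases h2 : k = j
      · subst h2; simp [h]
      · rw [Equiv.swap_apply_of_ne_of_ne h1 h2]
  refine Finset.sum_involution (fun p _ => (p.1 * Equiv.swap i j, p.2)) ?_ ?_ ?_ ?_
  · intro p _
    have h1 : signedPermAct (p.1 * Equiv.swap i j, p.2) x = signedPermAct p x := by
      funext k
      simp [signedPermAct, mul_inv_rev, Equiv.Perm.mul_apply, hsw]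
    have h2 : signedPermSign (p.1 * Equiv.swap i j, p.2) = - signedPermSign p := by
      simp [signedPermSign, Equiv.Perm.sign_mul, Equiv.Perm.sign_swap hij]
    rw [h1, h2, ← AddMonoidAlgebra.single_add]
    simp
  · intro p _ _ h
    have := congrArg Prod.fst h
    simp only [mul_eq_left] at this
    exact hij (Equiv.swap_eq_one_iff.1 this)
  · intro p _; simp
  · intro p _
    simp [mul_assoc]

lemma altSum_eq_zero_of_zero {n : ℕ} (x : Fin n → ℚ) (i : Fin n)
    (h : x i = 0) : altSum x = 0 := by
  unfold altSum
  refine Finset.sum_involution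
    (fun p _ => (p.1, p.2 * Pi.mulSingle (p.1 i) (-1 : ℤˣ))) ?_ ?_ ?_ ?_
  · intro p _
    have h1 : signedPermAct (p.1, p.2 * Pi.mulSingle (p.1 i) (-1 : ℤˣ)) x
        = signedPermAct p x := by
      funext k
      by_cases hk : k = p.1 i
      · subst hk; simp [signedPermAct, h]
      · simp [signedPermAct, Pi.mulSingle_eq_of_ne hk]
    have h2 : signedPermSign (p.1, p.2 * Pi.mulSingle (p.1 i) (-1 : ℤˣ))
        = - signedPermSign p := by
      have h3 : ∏ k, ((Pi.mulSingle (M := fun _ => ℤˣ) (p.1 i) (-1 : ℤˣ) k : ℤˣ) : ℤ) = -1 := by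
        rw [Finset.prod_eq_single (p.1 i)]
        · simp
        · intro b _ hb; simp [Pi.mulSingle_eq_of_ne hb]
        · simp
      simp only [signedPermSign, Pi.mul_apply, Units.val_mul, Finset.prod_mul_distrib, h3]
      ring
    rw [h1, h2, ← AddMonoidAlgebra.single_add]
    simp
  · intro p _ _ h
    have := congrFun (congrArg Prod.snd h) (p.1 i)
    simp at this
  · intro p _; simp
  · intro p _
    ext k
    · simp
    · by_cases hk : k = p.1 i
      · subst hk; simp
      · simp [Pi.mulSingle_eq_of_ne hk]

lemma act_add {n : ℕ} (p : SignedPerm n) (x y : Fin n → ℚ) :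
    signedPermAct p (x + y) = signedPermAct p x + signedPermAct p y := by
  funext k; simp [signedPermAct, mul_add]

lemma half_mul_altSum {n : ℕ} (x : Fin n → ℚ) :
    (∑ e : Fin n → ℤˣ, AddMonoidAlgebra.single (halfVec e) (1 : ℤ)) * altSum x
      = ∑ e : Fin n → ℤˣ, altSum (halfVec e + x) := by
  unfold altSum
  rw [Finset.sum_comm, Finset.mul_sum]
  refine Finset.sum_congr rfl fun p _ => ?_
  rw [Finset.sum_mul]
  symm
  refine Fintype.sum_equiv
    ((Equiv.arrowCongr p.1 (Equiv.refl ℤˣ)).trans (Equiv.mulLeft p.2)) _ _ fun e => ?_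
  rw [AddMonoidAlgebra.single_mul_single, one_mul, act_add]
  congr 2
  funext k
  simp [signedPermAct, halfVec, mul_assoc]

lemma unit_mul_altSum {n : ℕ} (x : Fin n → ℚ) :
    (∑ q : Fin n × ℤˣ, AddMonoidAlgebra.single (unitVec q) (1 : ℤ)) * altSum x
      = ∑ q : Fin n × ℤˣ, altSum (unitVec q + x) := by
  unfold altSum
  rw [Finset.sum_comm, Finset.mul_sum]
  refine Finset.sum_congr rfl fun p _ => ?_
  rw [Finset.sum_mul]
  symm
  refine Fintype.sum_bijective (fun q : Fin n × ℤˣ => (p.1 q.1, p.2 (p.1 q.1) * q.2)) ?_ _ _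
    fun q => ?_
  · refine (Finite.injective_iff_bijective).1 ?_
    rintro ⟨a, s⟩ ⟨b, t⟩ h
    simp only [Prod.mk.injEq, EmbeddingLike.apply_eq_iff_eq] at h
    obtain ⟨rfl, h⟩ := h
    simpa using h
  rw [AddMonoidAlgebra.single_mul_single, one_mul, act_add]
  congr 2
  funext k
  by_cases hk : k = p.1 q.1
  · subst hk; simp [signedPermAct, unitVec]
  · have : p.1⁻¹ k ≠ q.1 := fun h => hk (by rw [← h]; simp)
    simp [signedPermAct, unitVec, hk]
    exact fun h => absurd h this

lemma cast_unit_inj {a b : ℤˣ} {c : ℚ} (hc : c ≠ 0)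
    (h : ((a : ℤ) : ℚ) * c = ((b : ℤ) : ℚ) * c) : a = b := by
  have := mul_right_cancel₀ hc h
  exact Units.ext (by exact_mod_cast this)

lemma sum_mu {n : ℕ} :
    ∑ ν ∈ Finset.image (fun p : SignedPerm n => signedPermAct p (muWt n)) Finset.univ,
      AddMonoidAlgebra.single ν (1 : ℤ) =
    ∑ e : Fin n → ℤˣ, AddMonoidAlgebra.single (halfVec e) (1 : ℤ) := by
  have : Finset.image (fun p : SignedPerm n => signedPermAct p (muWt n)) Finset.univ
      = Finset.image (halfVec (n := n)) Finset.univ := by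
    ext v
    simp only [Finset.mem_image, Finset.mem_univ, true_and]
    constructor
    · rintro ⟨p, rfl⟩; exact ⟨p.2, rfl⟩
    · rintro ⟨e, rfl⟩; exact ⟨(1, e), rfl⟩
  rw [this, Finset.sum_image]
  intro a _ b _ h
  funext k
  exact cast_unit_inj (by norm_num) (congrFun h k)

lemma unit_cases_q (a : ℤˣ) : ((a : ℤ) : ℚ) = 1 ∨ ((a : ℤ) : ℚ) = -1 := by
  rcases Int.units_eq_one_or a with rfl | rfl <;> simp

lemma sum_lam {n : ℕ} (hn : 2 ≤ n) :
    ∑ ν ∈ Finset.image (fun p : SignedPerm n => signedPermAct p (lamWt n)) Finset.univ,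
      AddMonoidAlgebra.single ν (1 : ℤ) =
    ∑ q : Fin n × (Fin n → ℤˣ), AddMonoidAlgebra.single (threeVec q) (1 : ℤ) := by
  have : Finset.image (fun p : SignedPerm n => signedPermAct p (lamWt n)) Finset.univ
      = Finset.image (threeVec (n := n)) Finset.univ := by
    ext v
    simp only [Finset.mem_image, Finset.mem_univ, true_and]
    have key : ∀ p : SignedPerm n,
        signedPermAct p (lamWt n) = threeVec (p.1 ⟨0, by omega⟩, p.2) := by
      intro p
      funext k
      have : ((p.1⁻¹ k : Fin n) : ℕ) = 0 ↔ k = p.1 ⟨0, by omega⟩ := by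
        rw [← Equiv.Perm.inv_eq_iff_eq, Fin.ext_iff]
      simp only [signedPermAct, lamWt, threeVec, this]
    constructor
    · rintro ⟨p, rfl⟩; exact ⟨_, (key p).symm⟩
    · rintro ⟨⟨j, e⟩, rfl⟩
      refine ⟨(Equiv.swap ⟨0, by omega⟩ j, e), ?_⟩
      rw [key]; simp
  rw [this, Finset.sum_image]
  rintro ⟨i, a⟩ _ ⟨j, b⟩ _ h
  have hij : i = j := by
    by_contra hne
    have := congrFun h i
    simp only [threeVec, hne, if_true, if_false] at this
    rcases unit_cases_q (a i) with h1 | h1 <;> rcases unit_cases_q (b i) with h2 | h2 <;>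
      rw [h1, h2] at this <;> norm_num at this
  subst hij
  have : a = b := by
    funext k
    refine cast_unit_inj ?_ (congrFun h k)
    dsimp only; split_ifs <;> norm_num
  rw [this]

lemma half_mul_unit_step {n : ℕ} (j : Fin n) (e : Fin n → ℤˣ) :
    ∑ s : ℤˣ, AddMonoidAlgebra.single (unitVec (j, s)) (1 : ℤ) *
        AddMonoidAlgebra.single (halfVec e) (1 : ℤ) =
      AddMonoidAlgebra.single (threeVec (j, e)) (1 : ℤ) +
        AddMonoidAlgebra.single (halfVec (e * Pi.mulSingle j (-1 : ℤˣ))) (1 : ℤ) := by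
  rw [← Equiv.sum_comp (Equiv.mulLeft (e j))]
  rw [UnitsInt.univ, Finset.sum_pair (by decide)]
  simp only [AddMonoidAlgebra.single_mul_single, one_mul]
  congr 2
  · funext k
    by_cases hk : k = j
    · subst hk; simp [unitVec, halfVec, threeVec]; ring
    · simp [unitVec, halfVec, threeVec, hk]
  · funext k
    by_cases hk : k = j
    · subst hk; simp [unitVec, halfVec]; ring
    · simp [unitVec, halfVec, hk]

lemma half_mul_unit {n : ℕ} :
    (∑ q : Fin n × ℤˣ, AddMonoidAlgebra.single (unitVec q) (1 : ℤ)) *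
      (∑ e : Fin n → ℤˣ, AddMonoidAlgebra.single (halfVec e) (1 : ℤ)) =
    ∑ q : Fin n × (Fin n → ℤˣ), AddMonoidAlgebra.single (threeVec q) (1 : ℤ) +
      n • ∑ e : Fin n → ℤˣ, AddMonoidAlgebra.single (halfVec e) (1 : ℤ) := by
  have hn : n • ∑ e : Fin n → ℤˣ, AddMonoidAlgebra.single (halfVec e) (1 : ℤ)
      = ∑ j : Fin n, ∑ e : Fin n → ℤˣ, AddMonoidAlgebra.single (halfVec e) (1 : ℤ) := by
    simp
  rw [hn, Fintype.sum_prod_type, Fintype.sum_prod_type, ← Finset.sum_add_distrib,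
    Finset.sum_mul]
  refine Finset.sum_congr rfl fun j _ => ?_
  rw [Finset.sum_mul_sum, Finset.sum_comm]
  rw [Finset.sum_congr rfl fun e _ => half_mul_unit_step j e, Finset.sum_add_distrib]
  congr 1
  exact Fintype.sum_equiv (Equiv.mulRight (Pi.mulSingle j (-1 : ℤˣ))) _ _ fun e => rfl

lemma half_rho {n : ℕ} :
    (∑ e : Fin n → ℤˣ, AddMonoidAlgebra.single (halfVec e) (1 : ℤ)) * altSum (rhoWt n)
      = altSum (muWt n + rhoWt n) := by
  rw [half_mul_altSum, Finset.sum_eq_single (1 : Fin n → ℤˣ)]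
  · congr 2; funext k; simp [halfVec, muWt]
  · intro e _ he
    have hex : (Finset.univ.filter fun i => e i ≠ 1).Nonempty := by
      obtain ⟨i, hi⟩ := Function.ne_iff.1 he
      exact ⟨i, by simpa using hi⟩
    obtain ⟨i, hi, hmax⟩ := Finset.exists_max_image _ (fun i : Fin n => i) hex
    have hi1 : e i = -1 := by
      rcases Int.units_eq_one_or (e i) with h | h
      · simp [h] at hi
      · exact h
    by_cases hl : (i : ℕ) + 1 = n
    · apply altSum_eq_zero_of_zero _ i
      simp only [Pi.add_apply, halfVec, rhoWt, hi1]
      have hq : (n : ℚ) = ((i : ℕ) : ℚ) + 1 := by exact_mod_cast hl.symm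
      rw [hq]; push_cast; ring
    · have hlt : (i : ℕ) + 1 < n := by omega
      have hj : e ⟨i + 1, hlt⟩ = 1 := by
        by_contra hne
        have := hmax ⟨i + 1, hlt⟩ (by simpa using hne)
        simp only [Fin.le_def] at this
        omega
      apply altSum_eq_zero_of_eq _ i ⟨i + 1, hlt⟩
      · intro h; have := congrArg Fin.val h; simp at this
      · simp only [Pi.add_apply, halfVec, rhoWt, hi1, hj]; push_cast; ring
  · simp

lemma unit_mu_rho {n : ℕ} (hn : 2 ≤ n) :
    (∑ q : Fin n × ℤˣ, AddMonoidAlgebra.single (unitVec q) (1 : ℤ)) * altSum (muWt n + rhoWt n)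
      = altSum (lamWt n + rhoWt n) := by
  rw [unit_mul_altSum, Finset.sum_eq_single ((⟨0, by omega⟩ : Fin n), (1 : ℤˣ))]
  · congr 1; funext k
    by_cases hk : k = ⟨0, by omega⟩
    · subst hk; simp [unitVec, muWt, lamWt]; ring
    · have : (k : ℕ) ≠ 0 := fun h => hk (Fin.ext h)
      simp [unitVec, muWt, lamWt, hk, this]
  · rintro ⟨j, s⟩ _ hne
    rcases Int.units_eq_one_or s with rfl | rfl
    · have hj : (j : ℕ) ≠ 0 := by
        intro h; apply hne; congr 1; exact Fin.ext h
      obtain ⟨m, hm⟩ := Nat.exists_eq_succ_of_ne_zero hj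
      have hlt : m < n := by omega
      have hd : (⟨m, hlt⟩ : Fin n) ≠ j := by
        intro h; have := congrArg Fin.val h; simp at this; omega
      apply altSum_eq_zero_of_eq _ ⟨m, hlt⟩ j hd
      simp only [Pi.add_apply, unitVec, muWt, rhoWt, hd, if_true, if_false, hm]
      push_cast; ring
    · by_cases hl : (j : ℕ) + 1 = n
      · apply altSum_eq_zero_of_zero _ j
        simp only [Pi.add_apply, unitVec, muWt, rhoWt, if_true]
        have hq : (n : ℚ) = ((j : ℕ) : ℚ) + 1 := by exact_mod_cast hl.symm
        rw [hq]; push_cast; ring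
      · have hlt : (j : ℕ) + 1 < n := by omega
        have hd : (⟨j + 1, hlt⟩ : Fin n) ≠ j := by
          intro h; have := congrArg Fin.val h; simp at this
        apply altSum_eq_zero_of_eq _ ⟨j + 1, hlt⟩ j hd
        simp only [Pi.add_apply, unitVec, muWt, rhoWt, hd, if_true, if_false]
        push_cast; ring
  · simp

end Helpers

/-- Weyl character formula identity for the Weyl module `V(λ)` of `Spin_{2n+1}`
with `λ = ϖ₁ + ϖₙ` (`n ≥ 2`): in the group algebra `ℤ[ℚⁿ]`,
`Σ_{w ∈ Wₙ} sgn(w)·e^{w(λ+ρ)}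
  = (Σ_{ν ∈ Wₙ·λ} e^ν + n·Σ_{ν ∈ Wₙ·μ} e^ν)·(Σ_{w ∈ Wₙ} sgn(w)·e^{w(ρ)})`,
i.e. the character of `V(λ)` is the orbit sum of `λ` plus `n` times the orbit
sum of `μ = ϖₙ`. -/
theorem weyl_character_lam (n : ℕ) (hn : 2 ≤ n) :
    (∑ p : SignedPerm n,
        AddMonoidAlgebra.single (signedPermAct p (lamWt n + rhoWt n))
          (signedPermSign p)) =
      ((∑ ν ∈ Finset.image (fun p : SignedPerm n => signedPermAct p (lamWt n))
            Finset.univ,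
          AddMonoidAlgebra.single ν (1 : ℤ)) +
        n • ∑ ν ∈ Finset.image (fun p : SignedPerm n => signedPermAct p (muWt n))
            Finset.univ,
          AddMonoidAlgebra.single ν (1 : ℤ)) *
      (∑ p : SignedPerm n,
        AddMonoidAlgebra.single (signedPermAct p (rhoWt n))
          (signedPermSign p)) := by
  rw [sum_lam hn, sum_mu, ← half_mul_unit, mul_assoc]
  change altSum _ = _ * (_ * altSum _)
  rw [half_rho, unit_mu_rho hn]
end

section
/- Let n ≥ 1, and in ℚ^n set μ = (1/2, …, 1/2) and ρ = ((2n−1)/2, (2n−3)/2, …, 1/2). In the group algebra ℤ[ℚ^n] (the algebra with ℤ-basis the symbols e^ν for ν ∈ ℚ^n, with e^ν · e^ζ = e^{ν+ζ}), the following identity holds: Σ_{(σ,ε) ∈ W_n} sgn(σ)·(Π_i ε_i)·e^{(σ,ε)·(μ+ρ)} = ( Σ_{ν ∈ W_n·μ} e^ν ) · ( Σ_{(σ,ε) ∈ W_n} sgn(σ)·(Π_i ε_i)·e^{(σ,ε)·ρ} ). -/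
theorem altSum_zero {n : ℕ} (x : Fin n → ℚ) (j : Fin n) (hx : x j = 0) : altSum x = 0 := by
  unfold altSum
  have hsq : ∀ k : Fin n, (Pi.mulSingle k (-1) * Pi.mulSingle k (-1) : Fin n → ℤˣ) = 1 := by
    intro k
    rw [← Pi.mulSingle_mul]
    simp
  refine Finset.sum_involution
    (fun p _ => ((p.1, p.2 * Pi.mulSingle (p.1 j) (-1)) : SignedPerm n)) ?_ ?_ ?_ ?_
  · rintro ⟨σ, ε⟩ -
    have h1 : signedPermAct ((σ, ε * Pi.mulSingle (σ j) (-1)) : SignedPerm n) x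
        = signedPermAct (σ, ε) x := by
      funext i
      by_cases hi : i = σ j
      · subst hi
        simp [signedPermAct, hx]
      · simp [signedPermAct, Pi.mulSingle_eq_of_ne hi]
    have h2 : signedPermSign ((σ, ε * Pi.mulSingle (σ j) (-1)) : SignedPerm n)
        = - signedPermSign (σ, ε) := by
      have h3 : (∏ i, (((Pi.mulSingle (σ j) (-1) : Fin n → ℤˣ) i : ℤˣ) : ℤ)) = -1 := by
        rw [Finset.prod_eq_single (σ j)]
        · simp
        · intro b _ hb
          simp [Pi.mulSingle_eq_of_ne hb]
        · simp
      simp only [signedPermSign, Pi.mul_apply, Units.val_mul, Finset.prod_mul_distrib, h3]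
      ring
    dsimp only
    rw [h1, h2, ← AddMonoidAlgebra.single_add]
    simp
  · rintro ⟨σ, ε⟩ - - h
    have h4 := congrFun (congrArg Prod.snd h) (σ j)
    simp at h4
  · simp
  · rintro ⟨σ, ε⟩ -
    simp [mul_assoc, hsq]

theorem altSum_eq {n : ℕ} (x : Fin n → ℚ) (i j : Fin n) (hij : i ≠ j) (hx : x i = x j) :
    altSum x = 0 := by
  unfold altSum
  refine Finset.sum_involution
    (fun p _ => ((p.1 * Equiv.swap i j, p.2) : SignedPerm n)) ?_ ?_ ?_ ?_
  · rintro ⟨σ, ε⟩ -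
    have h1 : signedPermAct ((σ * Equiv.swap i j, ε) : SignedPerm n) x
        = signedPermAct (σ, ε) x := by
      funext k
      simp only [signedPermAct, mul_inv_rev, Equiv.swap_inv, Equiv.Perm.mul_apply]
      congr 1
      rw [Equiv.swap_apply_def]
      split_ifs with h h
      · rw [h, hx]
      · rw [h, hx]
      · rfl
    have h2 : signedPermSign ((σ * Equiv.swap i j, ε) : SignedPerm n)
        = - signedPermSign (σ, ε) := by
      simp [signedPermSign, Equiv.Perm.sign_mul, Equiv.Perm.sign_swap hij]
    dsimp only
    rw [h1, h2, ← AddMonoidAlgebra.single_add]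
    simp
  · rintro ⟨σ, ε⟩ - - h
    have h4 := congrArg Prod.fst h
    simp at h4
    exact hij h4
  · simp
  · rintro ⟨σ, ε⟩ -
    simp [mul_assoc]

/-- The weight `δ/2` attached to a sign vector. -/
def halfSign {n : ℕ} (d : Fin n → ℤˣ) : Fin n → ℚ := fun i => ((d i : ℤ) : ℚ) * (1 / 2)

theorem altSum_shift {n : ℕ} (d : Fin n → ℤˣ) (hd : d ≠ 1) :
    altSum (halfSign d + rhoWt n) = 0 := by
  have hne : (Finset.univ.filter (fun i => d i = -1)).Nonempty := by
    by_contra h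
    apply hd
    funext i
    rcases Int.units_eq_one_or (d i) with h1 | h1
    · exact h1
    · exact absurd ⟨i, by simp [h1]⟩ h
  obtain ⟨i, hi, hmax⟩ := Finset.exists_max_image _ (fun i : Fin n => i) hne
  have hi : d i = -1 := by simpa using hi
  by_cases hl : i.1 + 1 < n
  · have h1 : d ⟨i.1 + 1, hl⟩ = 1 := by
      rcases Int.units_eq_one_or (d ⟨i.1 + 1, hl⟩) with h1 | h1
      · exact h1
      · have := hmax ⟨i.1 + 1, hl⟩ (by simp [h1])
        have : i.1 + 1 ≤ i.1 := this
        omega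
    refine altSum_eq _ i ⟨i.1 + 1, hl⟩ ?_ ?_
    · intro h
      have := congrArg Fin.val h
      simp at this
    · simp only [Pi.add_apply, halfSign, rhoWt, hi, h1]
      push_cast
      ring
  · have hn : n = i.1 + 1 := by omega
    have hn' : (n : ℚ) = (i.1 : ℚ) + 1 := by exact_mod_cast hn
    refine altSum_zero _ i ?_
    simp only [Pi.add_apply, halfSign, rhoWt, hi, hn']
    push_cast
    ring

theorem halfSign_injective {n : ℕ} : Function.Injective (halfSign (n := n)) := by
  intro a b h
  funext i
  have h1 := congrFun h i
  simp only [halfSign] at h1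
  have h2 : ((a i : ℤ) : ℚ) = ((b i : ℤ) : ℚ) := by linarith
  exact Units.ext (by exact_mod_cast h2)

theorem orbit_eq (n : ℕ) :
    Finset.image (fun p : SignedPerm n => signedPermAct p (muWt n)) Finset.univ
      = Finset.image (halfSign (n := n)) Finset.univ := by
  ext v
  simp only [Finset.mem_image, Finset.mem_univ, true_and]
  constructor
  · rintro ⟨p, rfl⟩
    exact ⟨p.2, rfl⟩
  · rintro ⟨d, rfl⟩
    exact ⟨(1, d), rfl⟩

/-- The action of a signed permutation on sign vectors, as an equivalence. -/
def signEquiv {n : ℕ} (p : SignedPerm n) : (Fin n → ℤˣ) ≃ (Fin n → ℤˣ) where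
  toFun d := fun i => p.2 i * d (p.1⁻¹ i)
  invFun d := fun i => p.2 (p.1 i) * d (p.1 i)
  left_inv d := by
    funext i
    simp [← mul_assoc]
  right_inv d := by
    funext i
    simp [← mul_assoc]

/-- Weyl character formula identity for the Weyl module `V(μ)` of `Spin_{2n+1}`
with minuscule weight `μ = ϖₙ` (`n ≥ 1`): in the group algebra `ℤ[ℚⁿ]`,
`Σ_{w ∈ Wₙ} sgn(w)·e^{w(μ+ρ)} = (Σ_{ν ∈ Wₙ·μ} e^ν)·(Σ_{w ∈ Wₙ} sgn(w)·e^{w(ρ)})`,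
i.e. the character of `V(μ)` is the orbit sum of `μ`. -/
theorem weyl_character_mu (n : ℕ) (hn : 1 ≤ n) :
    (∑ p : SignedPerm n,
        AddMonoidAlgebra.single (signedPermAct p (muWt n + rhoWt n))
          (signedPermSign p)) =
      (∑ ν ∈ Finset.image (fun p : SignedPerm n => signedPermAct p (muWt n))
          Finset.univ,
        AddMonoidAlgebra.single ν (1 : ℤ)) *
      (∑ p : SignedPerm n,
        AddMonoidAlgebra.single (signedPermAct p (rhoWt n))
          (signedPermSign p)) := by
  rw [orbit_eq, Finset.sum_image (fun a _ b _ h => halfSign_injective h), Finset.sum_mul_sum,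
    Finset.sum_comm]
  have key : ∀ p : SignedPerm n,
      (∑ d : Fin n → ℤˣ, (AddMonoidAlgebra.single (halfSign d) (1 : ℤ) *
        AddMonoidAlgebra.single (signedPermAct p (rhoWt n)) (signedPermSign p) :
          AddMonoidAlgebra ℤ (Fin n → ℚ)))
      = ∑ d : Fin n → ℤˣ, AddMonoidAlgebra.single
          (signedPermAct p (halfSign d + rhoWt n)) (signedPermSign p) := by
    intro p
    rw [← (signEquiv p).sum_comp]
    refine Finset.sum_congr rfl fun d _ => ?_
    rw [AddMonoidAlgebra.single_mul_single, one_mul]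
    congr 1
    funext i
    simp only [Pi.add_apply, signedPermAct, halfSign, signEquiv, Equiv.coe_fn_mk]
    push_cast
    ring
  rw [Finset.sum_congr rfl fun p _ => key p, Finset.sum_comm]
  have h0 : muWt n = halfSign (1 : Fin n → ℤˣ) := by
    funext i
    simp [muWt, halfSign]
  rw [h0]
  symm
  exact Finset.sum_eq_single (1 : Fin n → ℤˣ) (fun d _ hd => altSum_shift d hd) (by simp)
end

section
/- Let n ≥ 1 and let M_n be the n×n integer matrix with M_{ii} = 2 for 1 ≤ i ≤ n−1, M_{nn} = 3, M_{i,i+1} = M_{i+1,i} = 1 for 1 ≤ i ≤ n−1, and all other entries 0. Then there exist matrices P, Q ∈ GL_n(ℤ) such that P·M_n·Q is the diagonal matrix diag(1, 1, …, 1, 2n+1); that is, the elementary divisors of M_n are (1, 1, …, 1, 2n+1). -/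
/-- The tridiagonal symmetric `n × n` integer matrix with diagonal
`(2, 2, …, 2, 3)` and sub- and super-diagonal entries all `1`: the Gram matrix
of the contravariant form on the `ϖₙ`-weight space of the integral Weyl module
`V_ℤ(ϖ₁ + ϖₙ)` for `Spin_{2n+1}`. -/
def gramM (n : ℕ) : Matrix (Fin n) (Fin n) ℤ :=
  fun i j =>
    if i = j then (if (i : ℕ) = n - 1 then 3 else 2)
    else if (i : ℕ) + 1 = (j : ℕ) ∨ (j : ℕ) + 1 = (i : ℕ) then 1 else 0


open Matrix in
lemma isUnit_det_shear {n : ℕ} (x y : Fin n → ℤ) (h : y ⬝ᵥ x = 0) :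
    IsUnit (1 + vecMulVec x y).det := by
  have : (1 + vecMulVec x y) * (1 - vecMulVec x y) = 1 := by
    simp [add_mul, mul_sub, vecMulVec_mul_vecMulVec, h]
  apply IsUnit.of_mul_eq_one (1 - vecMulVec x y).det
  rw [← det_mul, this, det_one]

/-- upper bidiagonal matrix of ones -/
def bidiag (m : ℕ) : Matrix (Fin (m+1)) (Fin (m+1)) ℤ :=
  fun i j => (if i = j then 1 else 0) + (if (i : ℕ) + 1 = (j : ℕ) then 1 else 0)

open Matrix in
lemma bidiag_det (m : ℕ) : (bidiag m).det = 1 := by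
  rw [det_of_isUpperTriangular]
  · simp [bidiag]
  · intro i j h
    have h' : (j : ℕ) < i := h
    simp only [bidiag, Fin.ext_iff]
    rw [if_neg (by omega), if_neg (by omega)]; rfl

open Matrix in
lemma gramM_eq (m : ℕ) : gramM (m+1) = bidiag m * (bidiag m)ᵀ
    + (2 : ℤ) • vecMulVec (Pi.single (Fin.last m) 1) (Pi.single (Fin.last m) 1) := by
  ext i j
  have key : ∑ k : Fin (m+1), (if (i : ℕ) + 1 = (k : ℕ) then (1:ℤ) else 0)
      * (if (j : ℕ) + 1 = (k : ℕ) then 1 else 0) = if i = j ∧ (i : ℕ) ≠ m then 1 else 0 := by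
    by_cases hi : (i : ℕ) = m
    · rw [Finset.sum_eq_zero]
      · simp [hi]
      · intro k _
        rw [if_neg (by omega)]; simp
    · rw [Finset.sum_eq_single (⟨i + 1, by omega⟩ : Fin (m+1))]
      · simp [Fin.ext_iff, hi, eq_comm]
      · intro k _ hk
        rw [if_neg (by intro h; exact hk (Fin.ext h.symm))]; simp
      · simp
  have e : (bidiag m * (bidiag m)ᵀ) i j = (if i = j then 1 else 0)
      + (if (i : ℕ) + 1 = (j : ℕ) then 1 else 0) + (if (j : ℕ) + 1 = (i : ℕ) then 1 else 0)
      + if i = j ∧ (i : ℕ) ≠ m then 1 else 0 := by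
    rw [← key]
    simp only [mul_apply, transpose_apply, bidiag, add_mul, mul_add, Finset.sum_add_distrib]
    have h1 : ∑ k : Fin (m+1), (if i = k then (1:ℤ) else 0) * (if j = k then 1 else 0)
        = if i = j then 1 else 0 := by simp [eq_comm]
    have h2 : ∑ k : Fin (m+1), (if i = k then (1:ℤ) else 0)
        * (if (j : ℕ) + 1 = (k : ℕ) then 1 else 0)
        = if (j : ℕ) + 1 = (i : ℕ) then 1 else 0 := by
      simp only [ite_mul, one_mul, zero_mul, Finset.sum_ite_eq, Finset.mem_univ, if_true]
    have h3 : ∑ k : Fin (m+1), (if (i : ℕ) + 1 = (k : ℕ) then (1:ℤ) else 0)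
        * (if j = k then 1 else 0)
        = if (i : ℕ) + 1 = (j : ℕ) then 1 else 0 := by simp
    rw [h1, h2, h3]
    ring
  rw [Matrix.add_apply, e]
  simp only [gramM, Matrix.smul_apply, vecMulVec_apply, Pi.single_apply, Fin.ext_iff, Fin.val_last]
  simp only [smul_eq_mul, Nat.add_sub_cancel]
  split_ifs <;> first | omega | simp

open Matrix in
theorem smith_gramM (n : ℕ) (hn : 1 ≤ n) :
    ∃ P Q : Matrix (Fin n) (Fin n) ℤ, IsUnit P.det ∧ IsUnit Q.det ∧
      P * gramM n * Q =
        Matrix.diagonal (fun i : Fin n =>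
          if (i : ℕ) = n - 1 then 2 * (n : ℤ) + 1 else 1) := by

  obtain ⟨m, rfl⟩ : ∃ m, n = m + 1 := ⟨n - 1, by omega⟩
  set e : Fin (m+1) → ℤ := Pi.single (Fin.last m) 1 with he
  set w : Fin (m+1) → ℤ := fun i => (-1) ^ (m - (i : ℕ)) with hw
  set x := w - e with hx
  have hee : e ⬝ᵥ e = 1 := by simp [he]
  have hew : e ⬝ᵥ w = 1 := by simp [he, hw]
  have hwe : w ⬝ᵥ e = 1 := by simp [he, hw]
  have hww : w ⬝ᵥ w = m + 1 := by
    simp [hw, dotProduct, ← mul_pow]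
  have hex : e ⬝ᵥ x = 0 := by simp [hx, dotProduct_sub, hew, hee]
  have hxe : x ⬝ᵥ e = 0 := by simp [hx, sub_dotProduct, hwe, hee]
  set B := bidiag m with hB
  have hBw : B *ᵥ w = e := by
    ext i
    simp only [mulVec, dotProduct, hB, bidiag, add_mul, Finset.sum_add_distrib, he,
      Pi.single_apply, Fin.ext_iff, Fin.val_last]
    have h1 : ∑ k : Fin (m+1), (if (i : ℕ) = (k : ℕ) then (1:ℤ) else 0) * w k = w i := by
      simp [← Fin.ext_iff]
    rw [h1]
    by_cases hi : (i : ℕ) = m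
    · rw [Finset.sum_eq_zero]
      · simp [hi, hw]
      · intro k _
        rw [if_neg (by omega)]; simp
    · rw [Finset.sum_eq_single (⟨i + 1, by omega⟩ : Fin (m+1))]
      · have : m - (i : ℕ) = (m - (i + 1)) + 1 := by omega
        simp only [hi, hw, if_true, if_false]
        rw [this, pow_succ]; ring
      · intro k _ hk
        rw [if_neg (by intro h; exact hk (Fin.ext h.symm))]; simp
      · simp
  have hBd : IsUnit B.det := by rw [hB, bidiag_det]; exact isUnit_one
  have hM : gramM (m+1) = B * (1 + (2:ℤ) • vecMulVec w w) * Bᵀ := by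
    rw [gramM_eq, mul_add, add_mul, mul_one, Matrix.mul_smul, Matrix.smul_mul, mul_vecMulVec, vecMulVec_mul,
      vecMul_transpose, hBw]
  set T := 1 + vecMulVec (-x) e with hT
  set E := 1 + vecMulVec ((-2 : ℤ) • e) x with hE
  have hTd : IsUnit T.det := isUnit_det_shear _ _ (by simp [hex])
  have hEd : IsUnit E.det := isUnit_det_shear _ _ (by rw [dotProduct_smul, hxe, smul_zero])
  have hD : Matrix.diagonal (fun i : Fin (m+1) =>
      if (i : ℕ) = m + 1 - 1 then 2 * ((m + 1 : ℕ) : ℤ) + 1 else 1)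
      = 1 + (2 * (m:ℤ) + 2) • vecMulVec e e := by
    ext i j
    simp only [diagonal_apply, Matrix.add_apply, one_apply, Matrix.smul_apply, vecMulVec_apply, he,
      Pi.single_apply, Fin.ext_iff, Fin.val_last, smul_eq_mul, Nat.add_sub_cancel]
    push_cast
    split_ifs <;> first | omega | (simp; try ring)
  have hxx : x ⬝ᵥ x = m := by
    have : x ⬝ᵥ x = w ⬝ᵥ w - w ⬝ᵥ e - (e ⬝ᵥ w - e ⬝ᵥ e) := by
      simp [hx, sub_dotProduct, dotProduct_sub]; ring
    rw [this, hww, hwe, hew, hee]; ring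
  have hxw : x ⬝ᵥ w = m := by
    rw [hx, sub_dotProduct, hww, hew]; ring
  have hkey : E * T * (1 + (2:ℤ) • vecMulVec w w)
      = (1 + (2 * (m:ℤ) + 2) • vecMulVec e e) * T := by
    have hw' : w = x + e := by simp [hx]
    rw [hE, hT, hw']
    simp only [add_mul, mul_add, one_mul, mul_one, Matrix.smul_mul, Matrix.mul_smul, vecMulVec_mul_vecMulVec,
      neg_dotProduct, dotProduct_neg, smul_dotProduct, dotProduct_smul, hex, hxe, hxx, hee,
      dotProduct_add, add_dotProduct]
    ext i j
    simp only [Matrix.add_apply, Matrix.smul_apply, vecMulVec_apply, Pi.add_apply, Pi.smul_apply,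
      Pi.neg_apply, smul_eq_mul]
    ring
  refine ⟨E * T * B⁻¹, Bᵀ⁻¹ * T⁻¹, ?_, ?_, ?_⟩
  · rw [det_mul, det_mul]
    exact (hEd.mul hTd).mul (isUnit_nonsing_inv_det _ hBd)
  · rw [det_mul]
    exact (isUnit_nonsing_inv_det _ (by rwa [det_transpose])).mul (isUnit_nonsing_inv_det _ hTd)
  · rw [hD, hM]
    have hBt : IsUnit Bᵀ.det := by rwa [det_transpose]
    calc _ = E * T * (B⁻¹ * B) * (1 + (2:ℤ) • vecMulVec w w) * (Bᵀ * Bᵀ⁻¹) * T⁻¹ := by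
            simp only [mul_assoc]
      _ = _ := by
        rw [nonsing_inv_mul _ hBd, mul_nonsing_inv _ hBt, mul_one, mul_one, hkey, mul_assoc,
          mul_nonsing_inv _ hTd, mul_one]
end

section
/- Let n ≥ 1 and let M_n be the n×n integer matrix with M_{ii} = 2 for 1 ≤ i ≤ n−1, M_{nn} = 3, M_{i,i+1} = M_{i+1,i} = 1 for 1 ≤ i ≤ n−1, and all other entries 0. Then the cokernel ℤ^n / M_n·ℤ^n of the ℤ-linear map given by M_n is isomorphic, as an abelian group, to ℤ/(2n+1)ℤ. -/
/-- Standard basis vectors indexed by `ℕ` (zero out of range). -/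
def stdE (n k : ℕ) : Fin n → ℤ := fun i => if (i : ℕ) = k then 1 else 0

/-- The annihilating functional. -/
def phiC (n : ℕ) : (Fin n → ℤ) →ₗ[ℤ] ℤ :=
  ∑ i : Fin n, ((-1) ^ (i : ℕ) * ((i : ℤ) + 1)) • LinearMap.proj i

theorem phiC_stdE (n k : ℕ) (h : k < n) : phiC n (stdE n k) = (-1) ^ k * ((k : ℤ) + 1) := by
  simp only [phiC, stdE, LinearMap.sum_apply, LinearMap.smul_apply, LinearMap.proj_apply]
  rw [Finset.sum_eq_single ⟨k, h⟩]
  · simp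
  · intro b _ hb
    have : (b : ℕ) ≠ k := fun hh => hb (Fin.ext hh)
    simp [this]
  · simp

theorem phiC_stdE_out (n : ℕ) : phiC n (stdE n n) = 0 := by
  have : stdE n n = 0 := by
    ext i
    have : (i : ℕ) ≠ n := by omega
    simp [stdE, this]
  simp [this]

theorem col_zero (n : ℕ) (h : 1 < n) :
    Matrix.toLin' (gramM n) (stdE n 0) = (2 : ℤ) • stdE n 0 + stdE n 1 := by
  have hs : stdE n 0 = Pi.single (⟨0, by omega⟩ : Fin n) 1 := by
    ext i; simp [stdE, Pi.single_apply, Fin.ext_iff]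
  nth_rewrite 1 [hs]
  ext i
  rw [Matrix.toLin'_apply, Matrix.mulVec_single_one]
  simp only [Matrix.col_apply, gramM, stdE, Pi.add_apply, Pi.smul_apply, Fin.ext_iff, smul_eq_mul]
  split_ifs <;> first | omega | simp_all

theorem col_succ (n j : ℕ) (h : j + 1 < n) :
    Matrix.toLin' (gramM n) (stdE n (j + 1)) =
      stdE n j + (if j + 2 = n then (3 : ℤ) else 2) • stdE n (j + 1) + stdE n (j + 2) := by
  have hs : stdE n (j + 1) = Pi.single (⟨j + 1, by omega⟩ : Fin n) 1 := by
    ext i; simp [stdE, Pi.single_apply, Fin.ext_iff]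
  nth_rewrite 1 [hs]
  ext i
  rw [Matrix.toLin'_apply, Matrix.mulVec_single_one]
  simp only [Matrix.col_apply, gramM, stdE, Pi.add_apply, Pi.smul_apply, Fin.ext_iff, smul_eq_mul]
  split_ifs <;> first | omega | simp_all

theorem col_one : Matrix.toLin' (gramM 1) (stdE 1 0) = (3 : ℤ) • stdE 1 0 := by
  ext i
  fin_cases i
  simp [Matrix.toLin'_apply, Matrix.mulVec, dotProduct, gramM, stdE]

theorem phiC_col (n j : ℕ) (h : j < n) :
    ((2 * n + 1 : ℕ) : ℤ) ∣ phiC n (Matrix.toLin' (gramM n) (stdE n j)) := by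
  rcases j with _ | j
  · by_cases h1 : n = 1
    · subst h1
      rw [col_one, map_smul, phiC_stdE _ _ h]; simp
    · rw [col_zero n (by omega), map_add, map_smul, phiC_stdE _ _ h, phiC_stdE _ _ (by omega)]
      simp
  · rw [col_succ n j h, map_add, map_add, map_smul, phiC_stdE _ _ h, phiC_stdE _ _ (by omega)]
    by_cases h2 : j + 2 = n
    · subst h2
      rw [phiC_stdE_out, if_pos rfl]
      refine ⟨(-1) ^ (j + 1), ?_⟩
      push_cast
      rw [smul_eq_mul]
      ring
    · rw [if_neg h2, phiC_stdE _ _ (by omega)]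
      refine ⟨0, ?_⟩
      push_cast
      rw [smul_eq_mul]
      ring

theorem sum_stdE (n : ℕ) (v : Fin n → ℤ) : v = ∑ i : Fin n, v i • stdE n i := by
  ext k
  simp [stdE, Finset.sum_apply, ← Fin.ext_iff]

theorem stdE_red (n : ℕ) (k : ℕ) (h : k < n) :
    stdE n k - ((-1) ^ k * ((k : ℤ) + 1)) • stdE n 0 ∈
      LinearMap.range (Matrix.toLin' (gramM n)) := by
  induction k using Nat.strong_induction_on with
  | _ k ih =>
    match k with
    | 0 => simp
    | 1 =>
      refine ⟨stdE n 0, ?_⟩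
      rw [col_zero n h]
      push_cast
      module
    | k + 2 =>
      have h0 := ih k (by omega) (by omega)
      have h1 := ih (k + 1) (by omega) (by omega)
      have h2 : _ ∈ LinearMap.range (Matrix.toLin' (gramM n)) := ⟨stdE n (k + 1), rfl⟩
      rw [col_succ n k (by omega), if_neg (by omega)] at h2
      have h3 := sub_mem (sub_mem h2 h0) (Submodule.smul_mem _ (2 : ℤ) h1)
      convert h3 using 1
      push_cast
      rw [pow_succ, pow_succ]
      module

theorem stdE_top (n : ℕ) (hn : 1 ≤ n) :
    ((2 * n + 1 : ℕ) : ℤ) • stdE n 0 ∈ LinearMap.range (Matrix.toLin' (gramM n)) := by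
  by_cases h1 : n = 1
  · subst h1
    exact ⟨stdE 1 0, by rw [col_one]; norm_num⟩
  obtain ⟨j, rfl⟩ : ∃ j, n = j + 2 := ⟨n - 2, by omega⟩
  have h0 := stdE_red (j + 2) j (by omega)
  have h1 := stdE_red (j + 2) (j + 1) (by omega)
  have h2 : _ ∈ LinearMap.range (Matrix.toLin' (gramM (j + 2))) := ⟨stdE (j + 2) (j + 1), rfl⟩
  have ho : stdE (j + 2) (j + 2) = 0 := by
    ext i
    have : (i : ℕ) ≠ j + 2 := by omega
    simp [stdE, this]
  rw [col_succ (j + 2) j (by omega), if_pos rfl, ho] at h2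
  have h3 := Submodule.smul_mem _ ((-1 : ℤ) ^ (j + 1))
    (sub_mem (sub_mem h2 h0) (Submodule.smul_mem _ (3 : ℤ) h1))
  convert h3 using 1
  push_cast
  rcases neg_one_pow_eq_or ℤ j with hj | hj <;> rw [pow_succ, hj] <;> module

theorem ker_range (n : ℕ) (hn : 1 ≤ n) (v : Fin n → ℤ) :
    v ∈ LinearMap.range (Matrix.toLin' (gramM n)) ↔ ((2 * n + 1 : ℕ) : ℤ) ∣ phiC n v := by
  constructor
  · rintro ⟨w, rfl⟩
    rw [sum_stdE n w, map_sum, map_sum]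
    refine Finset.dvd_sum fun i _ => ?_
    rw [map_smul, map_smul]
    exact Dvd.dvd.mul_left (phiC_col n i i.2) _
  · rintro ⟨c, hc⟩
    have key : v - phiC n v • stdE n 0 ∈ LinearMap.range (Matrix.toLin' (gramM n)) := by
      have h := Submodule.sum_mem (LinearMap.range (Matrix.toLin' (gramM n)))
        (t := Finset.univ) (f := fun i : Fin n =>
          v i • (stdE n i - ((-1) ^ (i : ℕ) * ((i : ℤ) + 1)) • stdE n 0))
        (fun i _ => Submodule.smul_mem _ _ (stdE_red n i i.2))
      convert h using 1
      simp only [smul_sub, Finset.sum_sub_distrib, ← sum_stdE, smul_smul, ← Finset.sum_smul]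
      congr 2
      simp [phiC, mul_comm]
    have h2 := Submodule.smul_mem _ c (stdE_top n hn)
    rw [smul_smul, mul_comm, ← hc] at h2
    simpa using add_mem key h2

/-- For `n ≥ 1`, the cokernel `ℤⁿ / Mₙ·ℤⁿ` of the `ℤ`-linear map given by the
tridiagonal matrix `Mₙ` is isomorphic, as an abelian group, to `ℤ/(2n+1)ℤ`. -/
theorem cokernel_gramM (n : ℕ) (hn : 1 ≤ n) :
    Nonempty
      (((Fin n → ℤ) ⧸ LinearMap.range (Matrix.toLin' (gramM n))) ≃+
        ZMod (2 * n + 1)) := by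
  let f : (Fin n → ℤ) →ₗ[ℤ] ZMod (2 * n + 1) :=
    (Int.castAddHom (ZMod (2 * n + 1))).toIntLinearMap ∘ₗ phiC n
  have hf : ∀ v, f v = ((phiC n v : ℤ) : ZMod (2 * n + 1)) := fun v => rfl
  have hk : LinearMap.range (Matrix.toLin' (gramM n)) = LinearMap.ker f := by
    ext v
    rw [ker_range n hn, LinearMap.mem_ker, hf, ZMod.intCast_zmod_eq_zero_iff_dvd]
  have hs : Function.Surjective f := by
    intro y
    obtain ⟨z, rfl⟩ := ZMod.intCast_surjective y
    refine ⟨z • stdE n 0, ?_⟩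
    rw [hf, map_smul, phiC_stdE _ _ (by omega)]
    simp
  rw [hk]
  exact ⟨(f.quotKerEquivOfSurjective hs).toAddEquiv⟩
end
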